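/- Let n > 3/2, α ≥ 0, β = n − 3/2, and let u be a strictly positive classical solution of the thin-film equation ∂_t u + ∂_θ( uⁿ ( ∂_θ³ u + α² ∂_θ u − sin θ ) ) = 0, 2π-periodic in θ, of mass M = ∫_{-π}^{π} u(0,θ) dθ. Then there exists a constant K₀, depending only on n, α, M, and the initial energy E(u(0,·)), such that the entropy satisfies S(u(t,·)) ≤ S(u(0,·)) + K₀ t for all t ≥ 0. -/

import Mathlib

open MeasureTheory Real Set Filter

/-- The thin-film energy `E(v) = (1/2)∫_{-π}^{π} (v'² − α²v²) dθ − ∫_{-π}^{π} v cos θ dθ`. -/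
noncomputable def energy (α : ℝ) (u : ℝ → ℝ) : ℝ :=
  (1/2) * (∫ θ in (-π)..π, ((deriv u θ)^2 - α^2 * (u θ)^2)) -
    ∫ θ in (-π)..π, u θ * Real.cos θ

/-- A strictly positive classical solution of the thin-film equation
`∂ₜu + ∂_θ(uⁿ(∂_θ³u + α²∂_θu − sin θ)) = 0` on `(0,∞) × ℝ`: a smooth function on
`[0,∞) × ℝ`, `2π`-periodic and strictly positive, satisfying the equation for `t > 0`. -/
def IsThinFilmSolution (n α : ℝ) (u : ℝ → ℝ → ℝ) : Prop :=
  ContDiffOn ℝ (⊤ : ℕ∞) (fun p : ℝ × ℝ => u p.1 p.2) (Ici (0:ℝ) ×ˢ (univ : Set ℝ)) ∧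
  (∀ t θ : ℝ, 0 ≤ t → 0 < u t θ) ∧
  (∀ t : ℝ, Function.Periodic (u t) (2*π)) ∧
  (∀ t θ : ℝ, 0 < t →
    deriv (fun s => u s θ) t +
      deriv (fun x => u t x ^ n *
        (deriv (deriv (deriv (u t))) x + α^2 * deriv (u t) x - Real.sin x)) θ = 0)

theorem integral_deriv_eq_zero_of_periodic {F F' : ℝ → ℝ} (hF : ∀ x, HasDerivAt F (F' x) x)
    (hF' : Continuous F') (hper : Function.Periodic F (2 * π)) :
    ∫ x in (-π)..π, F' x = 0 := by
  rw [intervalIntegral.integral_eq_sub_of_hasDerivAt (fun x _ => hF x)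
    (hF'.intervalIntegrable _ _)]
  have h := hper (-π)
  rw [show -π + 2 * π = π by ring] at h
  linarith

/-- With `q = a'' - a'² / (2a)`, the integrand `a' (a''' - sin) / √a` equals
`-q² / √a - l (√a q + a'² / √a) + 2 √a cos` up to an exact derivative. -/
theorem hasDerivAt_entropy_flux_potential {a b c : ℝ → ℝ} {d x : ℝ} (l : ℝ)
    (hpos : 0 < a x) (ha : HasDerivAt a (b x) x)
    (hb : HasDerivAt b (c x) x) (hc : HasDerivAt c d x) :
    HasDerivAt (fun y => b y * c y / √(a y) - b y ^ 3 / (6 * √(a y) ^ 3) + l * (√(a y) * b y)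
        - 2 * (√(a y) * Real.sin y))
      (b x / √(a x) * (d - Real.sin x) + (c x - b x ^ 2 / (2 * a x)) ^ 2 / √(a x)
        + l * (√(a x) * (c x - b x ^ 2 / (2 * a x)) + b x ^ 2 / √(a x))
        - 2 * (√(a x) * Real.cos x)) x := by
  have hs : 0 < √(a x) := Real.sqrt_pos.2 hpos
  have hsq : a x = √(a x) ^ 2 := (Real.sq_sqrt hpos.le).symm
  have hr := ha.sqrt hpos.ne'
  have h := ((((hb.mul hc).div hr hs.ne').sub ((hb.pow 3).div ((hr.pow 3).const_mul 6)
    (mul_pos (by norm_num) (pow_pos hs 3)).ne')).add ((hr.mul hb).const_mul l)).sub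
      ((hr.mul (Real.hasDerivAt_sin x)).const_mul 2)
  refine h.congr_deriv ?_
  simp only [Pi.mul_apply, Pi.pow_apply]
  generalize √(a x) = s at *
  rw [hsq]
  field_simp
  push_cast
  ring

/-- Pointwise control of `√a` by the mass and an arbitrarily small multiple of `∫ a'² / √a`. -/
theorem sqrt_le_of_integral {a b : ℝ → ℝ} {M δ : ℝ} (hδ : 0 < δ)
    (hpos : ∀ x, 0 < a x) (ha : ∀ x, HasDerivAt a (b x) x) (hb : Continuous b)
    (hM : ∫ x in (-π)..π, a x = M) {x : ℝ} (hx : x ∈ Icc (-π) π) :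
    √(a x) ≤ 1 + (M / (2 * π)) ^ (3 / 4 : ℝ)
      + (δ * (∫ y in (-π)..π, b y ^ 2 / √(a y)) + 9 * (2 * π) / (64 * δ)) := by
  have hac : Continuous a := continuous_iff_continuousAt.2 fun x => (ha x).continuousAt
  have hpi := Real.pi_pos
  obtain ⟨y, hy, hyM⟩ : ∃ y ∈ Icc (-π) π, a y ≤ M / (2 * π) := by
    by_contra! hcon
    have h1 : ∫ x in (-π)..π, M / (2 * π) < ∫ x in (-π)..π, a x := by
      apply intervalIntegral.integral_lt_integral_of_continuousOn_of_le_of_exists_lt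
        (by linarith) continuousOn_const hac.continuousOn
      · intro x hx
        exact (hcon x ⟨hx.1.le, hx.2⟩).le
      · exact ⟨π, ⟨by linarith, le_rfl⟩, hcon π ⟨by linarith, le_rfl⟩⟩
    rw [hM, intervalIntegral.integral_const, smul_eq_mul] at h1
    field_simp at h1
    linarith
  have hsc : ∀ z, √(a z) ≠ 0 := fun z => (Real.sqrt_pos.2 (hpos z)).ne'
  have hB : Continuous fun z => b z ^ 2 / √(a z) := by fun_prop (disch := exact hsc _)
  have hd : ∀ z, HasDerivAt (fun z => a z ^ (3 / 4 : ℝ))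
      (b z * (3 / 4 : ℝ) * a z ^ (3 / 4 - 1 : ℝ)) z :=
    fun z => (ha z).rpow_const (Or.inl (hpos z).ne')
  have hdc : Continuous fun z => b z * (3 / 4 : ℝ) * a z ^ (3 / 4 - 1 : ℝ) :=
    (hb.mul continuous_const).mul (hac.rpow_const fun z => Or.inl (hpos z).ne')
  have hft := intervalIntegral.integral_eq_sub_of_hasDerivAt (a := y) (b := x)
    (fun z _ => hd z) (hdc.intervalIntegrable _ _)
  have hyoung : ∀ z, ‖b z * (3 / 4 : ℝ) * a z ^ (3 / 4 - 1 : ℝ)‖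
      ≤ δ * (b z ^ 2 / √(a z)) + 9 / (64 * δ) := by
    intro z
    have hsq : (a z ^ (3 / 4 - 1 : ℝ)) ^ 2 = 1 / √(a z) := by
      rw [← Real.rpow_natCast, ← Real.rpow_mul (hpos z).le, Real.sqrt_eq_rpow, one_div,
        ← Real.rpow_neg (hpos z).le]
      norm_num
    rw [div_eq_mul_one_div (b z ^ 2), ← hsq, ← mul_pow, Real.norm_eq_abs, mul_right_comm, abs_mul,
      ← sq_abs (b z * _), abs_of_pos (by norm_num : (0 : ℝ) < 3 / 4)]
    generalize |b z * a z ^ (3 / 4 - 1 : ℝ)| = q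
    have : 0 ≤ (8 * δ * q - 3) ^ 2 / (64 * δ) := by positivity
    have e : (8 * δ * q - 3) ^ 2 / (64 * δ) = δ * q ^ 2 + 9 / (64 * δ) - q * (3 / 4) := by
      field_simp; ring
    linarith
  have hbound : a x ^ (3 / 4 : ℝ) - a y ^ (3 / 4 : ℝ)
      ≤ δ * (∫ y in (-π)..π, b y ^ 2 / √(a y)) + 9 * (2 * π) / (64 * δ) := by
    rw [← hft]
    calc _ ≤ ‖∫ z in y..x, b z * (3 / 4 : ℝ) * a z ^ (3 / 4 - 1 : ℝ)‖ := Real.le_norm_self _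
      _ ≤ ∫ z in uIoc y x, ‖b z * (3 / 4 : ℝ) * a z ^ (3 / 4 - 1 : ℝ)‖ :=
        intervalIntegral.norm_integral_le_integral_norm_uIoc
      _ ≤ ∫ z in Ioc (-π) π, ‖b z * (3 / 4 : ℝ) * a z ^ (3 / 4 - 1 : ℝ)‖ := by
        apply setIntegral_mono_set
        · exact (hdc.norm.intervalIntegrable (-π) π).1
        · exact Eventually.of_forall fun _ => norm_nonneg _
        · exact (Ioc_subset_Ioc (le_min hy.1 hx.1) (max_le hy.2 hx.2)).eventuallyLE
      _ = ∫ z in (-π)..π, ‖b z * (3 / 4 : ℝ) * a z ^ (3 / 4 - 1 : ℝ)‖ :=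
        (intervalIntegral.integral_of_le (by linarith)).symm
      _ ≤ ∫ z in (-π)..π, (δ * (b z ^ 2 / √(a z)) + 9 / (64 * δ)) :=
        intervalIntegral.integral_mono_on (by linarith) (hdc.norm.intervalIntegrable _ _)
          (((hB.const_mul δ).add continuous_const).intervalIntegrable _ _) fun z _ => hyoung z
      _ = _ := by
        rw [intervalIntegral.integral_add ((hB.const_mul δ).intervalIntegrable _ _)
          (continuous_const.intervalIntegrable _ _), intervalIntegral.integral_const_mul,
          intervalIntegral.integral_const, smul_eq_mul]
        ring
  have hy' : a y ^ (3 / 4 : ℝ) ≤ (M / (2 * π)) ^ (3 / 4 : ℝ) :=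
    Real.rpow_le_rpow (hpos y).le hyM (by norm_num)
  have hx' : √(a x) ≤ 1 + a x ^ (3 / 4 : ℝ) := by
    rw [Real.sqrt_eq_rpow]
    rcases le_total (a x) 1 with h | h
    · have := Real.rpow_le_one (hpos x).le h (by norm_num : (0 : ℝ) ≤ 1 / 2)
      have := Real.rpow_nonneg (hpos x).le (3 / 4)
      linarith
    · have := Real.rpow_le_rpow_of_exponent_le h (by norm_num : (1 / 2 : ℝ) ≤ 3 / 4)
      linarith
  linarith

/-- The entropy production of a positive periodic profile is bounded in terms of `α` and its mass. -/
theorem exists_entropy_production_bound (α M : ℝ) (hM : 0 < M) :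
    ∃ C : ℝ, ∀ a b c d : ℝ → ℝ, (∀ x, 0 < a x) → (∀ x, HasDerivAt a (b x) x) →
      (∀ x, HasDerivAt b (c x) x) → (∀ x, HasDerivAt c (d x) x) → Continuous d →
      Function.Periodic a (2 * π) → Function.Periodic b (2 * π) → Function.Periodic c (2 * π) →
      (∫ x in (-π)..π, a x) = M →
      (∫ x in (-π)..π, b x / √(a x) * (d x + α ^ 2 * b x - Real.sin x)) ≤ C := by
  set l : ℝ := α ^ 2 + 1 with hl
  have hl0 : 0 < l := by positivity
  set δ : ℝ := 4 / (l ^ 2 * M) with hδ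
  have hδ0 : 0 < δ := by positivity
  refine ⟨l ^ 2 / 4 * (M * (1 + (M / (2 * π)) ^ (3 / 4 : ℝ) + 9 * (2 * π) / (64 * δ)))
    + (2 * π + M), ?_⟩
  intro a b c d hpos ha hb hc hd pa pb pc haM
  have hpi := Real.pi_pos
  have hac : Continuous a := continuous_iff_continuousAt.2 fun x => (ha x).continuousAt
  have hbc : Continuous b := continuous_iff_continuousAt.2 fun x => (hb x).continuousAt
  have hcc : Continuous c := continuous_iff_continuousAt.2 fun x => (hc x).continuousAt
  have hs : ∀ z, 0 < √(a z) := fun z => Real.sqrt_pos.2 (hpos z)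
  have hs' : ∀ z, √(a z) ≠ 0 := fun z => (hs z).ne'
  have ha' : ∀ z, 2 * a z ≠ 0 := fun z => (mul_pos two_pos (hpos z)).ne'
  set B : ℝ := ∫ y in (-π)..π, b y ^ 2 / √(a y)
  set R : ℝ := 1 + (M / (2 * π)) ^ (3 / 4 : ℝ) + (δ * B + 9 * (2 * π) / (64 * δ)) with hR
  set F' : ℝ → ℝ := fun x => b x / √(a x) * (d x - Real.sin x)
    + (c x - b x ^ 2 / (2 * a x)) ^ 2 / √(a x)
    + l * (√(a x) * (c x - b x ^ 2 / (2 * a x)) + b x ^ 2 / √(a x))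
    - 2 * (√(a x) * Real.cos x) with hF'
  have hFc : Continuous F' := by
    rw [hF']
    fun_prop (disch := first | exact hs' _ | exact ha' _)
  have hF0 : ∫ x in (-π)..π, F' x = 0 := by
    refine integral_deriv_eq_zero_of_periodic
      (fun x => hasDerivAt_entropy_flux_potential l (hpos x) (ha x) (hb x) (hc x)) hFc ?_
    intro x
    simp only [pa x, pb x, pc x, Real.sin_add_two_pi]
  have hBc : Continuous fun z => b z ^ 2 / √(a z) := by fun_prop (disch := exact hs' _)
  have hGc : Continuous fun x => b x / √(a x) * (d x + α ^ 2 * b x - Real.sin x) := by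
    fun_prop (disch := exact hs' _)
  have hpt : ∀ x ∈ Icc (-π) π, b x / √(a x) * (d x + α ^ 2 * b x - Real.sin x)
      ≤ F' x + (l ^ 2 / 4 * R * a x - b x ^ 2 / √(a x) + (1 + a x)) := by
    intro x hx
    have h1 : √(a x) ≤ R := sqrt_le_of_integral hδ0 hpos ha hbc haM hx
    have hsq : √(a x) ^ 2 = a x := Real.sq_sqrt (hpos x).le
    have h2 : l ^ 2 / 4 * √(a x) * a x ≤ l ^ 2 / 4 * R * a x := by
      have := hpos x
      gcongr
    have h3 : 2 * (√(a x) * Real.cos x) ≤ 1 + a x := by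
      nlinarith [Real.cos_sq_le_one x, sq_nonneg (√(a x) - Real.cos x)]
    have h4 : 0 ≤ ((c x - b x ^ 2 / (2 * a x)) + l / 2 * a x) ^ 2 / √(a x) := by
      have := hs x; positivity
    have h5 : ((c x - b x ^ 2 / (2 * a x)) + l / 2 * a x) ^ 2 / √(a x)
        = (c x - b x ^ 2 / (2 * a x)) ^ 2 / √(a x) + l * (√(a x) * (c x - b x ^ 2 / (2 * a x)))
          + l ^ 2 / 4 * √(a x) * a x := by
      generalize c x - b x ^ 2 / (2 * a x) = q
      have := hs x
      rw [← hsq, Real.sqrt_sq this.le]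
      field_simp
      ring
    have h6 : b x / √(a x) * (d x + α ^ 2 * b x - Real.sin x)
        = b x / √(a x) * (d x - Real.sin x) + (l - 1) * (b x ^ 2 / √(a x)) := by
      rw [hl]; ring
    rw [h6]
    simp only [hF']
    linarith
  have hint := intervalIntegral.integral_mono_on (by linarith : -π ≤ π)
    (hGc.intervalIntegrable (μ := volume) _ _)
    (Continuous.intervalIntegrable (by fun_prop) _ _) hpt
  have i0 := hFc.intervalIntegrable (μ := volume) (-π) π
  have i1 := (hac.const_mul (l ^ 2 / 4 * R)).intervalIntegrable (μ := volume) (-π) π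
  have i2 := hBc.intervalIntegrable (μ := volume) (-π) π
  have i3 := (continuous_const (y := (1 : ℝ))).intervalIntegrable (μ := volume) (-π) π
  have i4 := hac.intervalIntegrable (μ := volume) (-π) π
  rw [intervalIntegral.integral_add i0 ((i1.sub i2).add (i3.add i4)),
    intervalIntegral.integral_add (i1.sub i2) (i3.add i4),
    intervalIntegral.integral_sub i1 i2, intervalIntegral.integral_add i3 i4,
    intervalIntegral.integral_const_mul, haM, hF0, intervalIntegral.integral_const,
    smul_eq_mul] at hint
  have hδB : l ^ 2 / 4 * M * δ = 1 := by rw [hδ]; field_simp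
  have : l ^ 2 / 4 * R * M = l ^ 2 / 4 * (M * (1 + (M / (2 * π)) ^ (3 / 4 : ℝ)
      + 9 * (2 * π) / (64 * δ))) + (l ^ 2 / 4 * M * δ) * B := by
    rw [hR]; ring
  rw [this, hδB] at hint
  linarith

theorem hasDerivAt_integral_of_continuousOn_deriv {F F' : ℝ → ℝ → ℝ} {a b t : ℝ} {s : Set ℝ}
    (hs : IsOpen s) (ht : t ∈ s) (hF : ∀ r ∈ s, Continuous (F r))
    (hF' : ContinuousOn (fun p : ℝ × ℝ => F' p.1 p.2) (s ×ˢ univ))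
    (hd : ∀ r ∈ s, ∀ x, HasDerivAt (fun r => F r x) (F' r x) r) :
    HasDerivAt (fun r => ∫ x in a..b, F r x) (∫ x in a..b, F' t x) t := by
  obtain ⟨ε, hε, hball⟩ := Metric.nhds_basis_closedBall.mem_iff.1 (hs.mem_nhds ht)
  have hK : IsCompact (Metric.closedBall t ε ×ˢ uIcc a b) :=
    (isCompact_closedBall t ε).prod isCompact_uIcc
  obtain ⟨C, hC⟩ := hK.exists_bound_of_continuousOn
    (hF'.mono (prod_mono hball (subset_univ _)))
  have hF't : Continuous (F' t) :=
    continuousOn_univ.1 (hF'.comp (f := fun x => (t, x)) (by fun_prop) fun x _ => ⟨ht, mem_univ x⟩)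
  refine (intervalIntegral.hasDerivAt_integral_of_dominated_loc_of_deriv_le
    (bound := fun _ => C) (Metric.closedBall_mem_nhds t hε) ?_
    ((hF t ht).intervalIntegrable _ _) hF't.aestronglyMeasurable ?_
    (continuous_const.intervalIntegrable _ _) ?_).2
  · filter_upwards [hs.mem_nhds ht] with r hr
    exact (hF r hr).aestronglyMeasurable
  · exact Eventually.of_forall fun x hx r hr => hC (r, x) ⟨hr, uIoc_subset_uIcc hx⟩
  · exact Eventually.of_forall fun x _ r hr => hd r (hball hr) x

theorem periodic_deriv {f : ℝ → ℝ} {c : ℝ} (hf : Function.Periodic f c) :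
    Function.Periodic (deriv f) c := by
  intro x
  rw [← deriv_comp_add_const, funext hf]

namespace IsThinFilmSolution

variable {n α : ℝ} {u : ℝ → ℝ → ℝ}

theorem contDiff_slice (hu : IsThinFilmSolution n α u) {t : ℝ} (ht : 0 ≤ t) :
    ContDiff ℝ (⊤ : ℕ∞) (u t) := by
  rw [← contDiffOn_univ]
  exact hu.1.comp (f := fun x : ℝ => (t, x)) (by fun_prop) fun x _ => ⟨ht, mem_univ x⟩

theorem continuousOn_integral_comp (hu : IsThinFilmSolution n α u) {φ : ℝ → ℝ}
    (hφ : ContinuousOn φ (Ioi 0)) :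
    ContinuousOn (fun t => ∫ x in (-π)..π, φ (u t x)) (Ici 0) := by
  have h : Continuous fun t => ∫ x in (-π)..π, φ (u (max t 0) x) := by
    apply intervalIntegral.continuous_parametric_intervalIntegral_of_continuous'
    have h1 : Continuous fun p : ℝ × ℝ => u (max p.1 0) p.2 :=
      continuousOn_univ.1 (hu.1.continuousOn.comp (f := fun p : ℝ × ℝ => (max p.1 0, p.2))
        (by fun_prop) fun p _ => ⟨le_max_right p.1 0, mem_univ p.2⟩)
    exact continuousOn_univ.1 (hφ.comp h1.continuousOn fun p _ =>
      hu.2.1 _ _ (le_max_right _ _))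
  refine h.continuousOn.congr fun t ht => ?_
  simp only [max_eq_left (mem_Ici.1 ht)]

theorem hasDerivAt_integral_comp (hu : IsThinFilmSolution n α u) {φ φ' : ℝ → ℝ}
    (hφ : ∀ y, 0 < y → HasDerivAt φ (φ' y) y) (hφ' : ContinuousOn φ' (Ioi 0))
    {t : ℝ} (ht : 0 < t) :
    HasDerivAt (fun t => ∫ x in (-π)..π, φ (u t x))
      (∫ x in (-π)..π, φ' (u t x) * deriv (fun s => u s x) t) t := by
  have hopen : IsOpen (Ioi (0 : ℝ) ×ˢ (univ : Set ℝ)) := isOpen_Ioi.prod isOpen_univ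
  have hU : ContDiffOn ℝ (⊤ : ℕ∞) (fun p : ℝ × ℝ => u p.1 p.2) (Ioi (0 : ℝ) ×ˢ univ) :=
    hu.1.mono (prod_mono Ioi_subset_Ici_self subset_rfl)
  have hdt : ∀ r ∈ Ioi (0 : ℝ), ∀ x, HasDerivAt (fun s => u s x)
      (fderiv ℝ (fun p : ℝ × ℝ => u p.1 p.2) (r, x) (1, 0)) r := by
    intro r hr x
    have h1 := ((hU.contDiffAt (hopen.mem_nhds (mk_mem_prod hr (mem_univ x)))).differentiableAt
      (by simp)).hasFDerivAt
    exact h1.comp_hasDerivAt (f := fun s => (s, x)) r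
      ((hasDerivAt_id r).prodMk (hasDerivAt_const r x))
  have hmaps : ∀ p ∈ Ioi (0 : ℝ) ×ˢ (univ : Set ℝ), u p.1 p.2 ∈ Ioi (0 : ℝ) :=
    fun p hp => hu.2.1 _ _ (le_of_lt hp.1)
  have hφc : ContinuousOn φ (Ioi 0) := fun y hy => (hφ y hy).continuousAt.continuousWithinAt
  refine hasDerivAt_integral_of_continuousOn_deriv (s := Ioi 0)
    (F := fun r x => φ (u r x)) (F' := fun r x => φ' (u r x) * deriv (fun s => u s x) r)
    isOpen_Ioi ht ?_ ?_ ?_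
  · intro r hr
    exact continuousOn_univ.1 (hφc.comp (hu.contDiff_slice (le_of_lt hr)).continuous.continuousOn
      fun x _ => hu.2.1 _ _ (le_of_lt hr))
  · refine (hφ'.comp hU.continuousOn hmaps).mul ?_
    have hf := hU.continuousOn_fderiv_of_isOpen hopen (by simp)
    exact (hf.clm_apply continuousOn_const).congr fun p hp => (hdt p.1 hp.1 p.2).deriv
  · intro r hr x
    have h := hdt r hr x
    exact (hφ _ (hu.2.1 r x (le_of_lt hr))).comp r (h.differentiableAt.hasDerivAt)

/-- The time derivative of `∫ φ(u)` is `∫ φ''(u) ∂_θu J`, with `J` the flux of the equation. -/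
theorem hasDerivAt_integral_comp_eq_flux (hu : IsThinFilmSolution n α u) {φ φ' φ'' : ℝ → ℝ}
    (hφ : ∀ y, 0 < y → HasDerivAt φ (φ' y) y) (hφ' : ∀ y, 0 < y → HasDerivAt φ' (φ'' y) y)
    (hφ'' : ContinuousOn φ'' (Ioi 0)) {t : ℝ} (ht : 0 < t) :
    HasDerivAt (fun t => ∫ x in (-π)..π, φ (u t x))
      (∫ x in (-π)..π, φ'' (u t x) * deriv (u t) x * (u t x ^ n *
        (deriv (deriv (deriv (u t))) x + α ^ 2 * deriv (u t) x - Real.sin x))) t := by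
  have hφ'c : ContinuousOn φ' (Ioi 0) := fun y hy => (hφ' y hy).continuousAt.continuousWithinAt
  have h := hu.hasDerivAt_integral_comp hφ hφ'c ht
  refine h.congr_deriv ?_
  have hv := hu.contDiff_slice ht.le
  have hpos : ∀ x, 0 < u t x := fun x => hu.2.1 t x ht.le
  have h1 := (contDiff_infty_iff_deriv.1 hv).2
  have h2 := (contDiff_infty_iff_deriv.1 h1).2
  have h3 := (contDiff_infty_iff_deriv.1 h2).2
  have hper := hu.2.2.1 t
  have hpde := hu.2.2.2 t
  set J : ℝ → ℝ := fun x => u t x ^ n *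
    (deriv (deriv (deriv (u t))) x + α ^ 2 * deriv (u t) x - Real.sin x) with hJ
  have hJs : ContDiff ℝ (⊤ : ℕ∞) J :=
    (hv.rpow_const_of_ne fun x => (hpos x).ne').mul
      ((h3.add (contDiff_const.mul h1)).sub Real.contDiff_sin)
  have hJ' := contDiff_infty_iff_deriv.1 hJs
  have hJper : Function.Periodic J (2 * π) := by
    intro x
    simp only [hJ, hper x, periodic_deriv hper x,
      periodic_deriv (periodic_deriv (periodic_deriv hper)) x, Real.sin_add_two_pi]
  have hc' : Continuous fun x => φ' (u t x) :=
    continuousOn_univ.1 (hφ'c.comp hv.continuous.continuousOn fun x _ => hpos x)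
  have hc'' : Continuous fun x => φ'' (u t x) :=
    continuousOn_univ.1 (hφ''.comp hv.continuous.continuousOn fun x _ => hpos x)
  have hi1 : Continuous fun x => φ'' (u t x) * deriv (u t) x * J x :=
    (hc''.mul h1.continuous).mul hJs.continuous
  have hi2 : Continuous fun x => φ' (u t x) * deriv J x := hc'.mul hJ'.2.continuous
  have hzero := integral_deriv_eq_zero_of_periodic (F := fun x => φ' (u t x) * J x)
    (F' := fun x => φ'' (u t x) * deriv (u t) x * J x + φ' (u t x) * deriv J x)
    (fun x => ((hφ' _ (hpos x)).comp x
      ((contDiff_infty_iff_deriv.1 hv).1 x).hasDerivAt).mul (hJ'.1 x).hasDerivAt)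
    (hi1.add hi2) (fun x => by simp only [hper x, hJper x])
  rw [intervalIntegral.integral_add (hi1.intervalIntegrable _ _)
    (hi2.intervalIntegrable _ _)] at hzero
  have heq : ∀ x, φ' (u t x) * deriv (fun s => u s x) t = -(φ' (u t x) * deriv J x) := by
    intro x
    have := hpde x ht
    rw [eq_neg_of_add_eq_zero_left this, mul_neg]
  simp only [heq, intervalIntegral.integral_neg]
  linarith

/-- Conservation of mass. -/
theorem integral_eq_initial (hu : IsThinFilmSolution n α u) {t : ℝ} (ht : 0 ≤ t) :
    ∫ x in (-π)..π, u t x = ∫ x in (-π)..π, u 0 x := by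
  have hd : ∀ s ∈ Ioo 0 t, HasDerivAt (fun s => ∫ x in (-π)..π, u s x) 0 s := by
    intro s hs
    simpa using hu.hasDerivAt_integral_comp_eq_flux (φ := id) (φ' := fun _ => 1)
      (φ'' := fun _ => 0) (fun y _ => hasDerivAt_id y) (fun y _ => hasDerivAt_const y 1)
      continuousOn_const hs.1
  have hc : ContinuousOn (fun s => ∫ x in (-π)..π, u s x) (Icc 0 t) :=
    (hu.continuousOn_integral_comp continuousOn_id).mono Icc_subset_Ici_self
  have hin : interior (Icc 0 t) = Ioo 0 t := interior_Icc
  have hle := antitoneOn_of_deriv_nonpos (convex_Icc 0 t) hc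
    (fun s hs => (hd s (hin ▸ hs)).differentiableAt.differentiableWithinAt)
    (fun s hs => (hd s (hin ▸ hs)).deriv.le)
  have hge := monotoneOn_of_deriv_nonneg (convex_Icc 0 t) hc
    (fun s hs => (hd s (hin ▸ hs)).differentiableAt.differentiableWithinAt)
    (fun s hs => (hd s (hin ▸ hs)).deriv.ge)
  exact le_antisymm (hle (left_mem_Icc.2 ht) (right_mem_Icc.2 ht) ht)
    (hge (left_mem_Icc.2 ht) (right_mem_Icc.2 ht) ht)

theorem hasDerivAt_entropy (hu : IsThinFilmSolution n α u) {β : ℝ} (hβ : β = n - 3 / 2)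
    {t : ℝ} (ht : 0 < t) :
    HasDerivAt (fun t => ∫ x in (-π)..π, u t x ^ (-β))
      (β * (β + 1) * ∫ x in (-π)..π, deriv (u t) x / √(u t x) *
        (deriv (deriv (deriv (u t))) x + α ^ 2 * deriv (u t) x - Real.sin x)) t := by
  have h := hu.hasDerivAt_integral_comp_eq_flux (φ := fun y => y ^ (-β))
    (φ' := fun y => -β * y ^ (-β - 1)) (φ'' := fun y => -β * ((-β - 1) * y ^ (-β - 1 - 1)))
    (fun y hy => Real.hasDerivAt_rpow_const (Or.inl hy.ne'))
    (fun y hy => (Real.hasDerivAt_rpow_const (Or.inl hy.ne')).const_mul _)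
    (continuousOn_const.mul (continuousOn_const.mul
      (continuousOn_id.rpow_const fun y hy => Or.inl (ne_of_gt hy)))) ht
  refine h.congr_deriv ?_
  rw [← intervalIntegral.integral_const_mul]
  refine intervalIntegral.integral_congr fun x _ => ?_
  have hpos : 0 < u t x := hu.2.1 t x ht.le
  have hpow : u t x ^ (-β - 1 - 1) * u t x ^ n = (√(u t x))⁻¹ := by
    rw [← Real.rpow_add hpos, Real.sqrt_eq_rpow, ← Real.rpow_neg hpos.le, hβ]
    congr 1
    ring
  rw [div_eq_mul_inv, ← hpow]
  ring

end IsThinFilmSolution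

/-- Linear-in-time entropy bound: for `n > 3/2` and `β = n − 3/2`, there
is a constant `K₀`, depending only on `n`, `α`, the mass `M`, and the initial energy `E₀`,
such that every strictly positive classical solution with these data satisfies
`S(u(t,·)) ≤ S(u(0,·)) + K₀ t` for all `t ≥ 0`. -/
theorem entropy_linear_bound (n α : ℝ) (hn : 3/2 < n) (hα : 0 ≤ α)
    (β : ℝ) (hβ : β = n - 3/2) (M E₀ : ℝ) (hM : 0 < M) :
    ∃ K₀ : ℝ, ∀ u : ℝ → ℝ → ℝ, IsThinFilmSolution n α u →
      (∫ θ in (-π)..π, u 0 θ) = M → energy α (u 0) = E₀ →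
      ∀ t : ℝ, 0 ≤ t →
        (∫ θ in (-π)..π, u t θ ^ (-β)) ≤ (∫ θ in (-π)..π, u 0 θ ^ (-β)) + K₀ * t := by
  obtain ⟨C, hC⟩ := exists_entropy_production_bound α M hM
  refine ⟨β * (β + 1) * C, fun u hu hmass _ t ht => ?_⟩
  have hβ0 : 0 < β := by linarith
  have hcont : ContinuousOn (fun s => ∫ θ in (-π)..π, u s θ ^ (-β)) (Ici 0) :=
    hu.continuousOn_integral_comp (φ := fun y => y ^ (-β))
      (continuousOn_id.rpow_const fun y hy => Or.inl (ne_of_gt hy))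
  have hder : ∀ s ∈ interior (Ici (0 : ℝ)), HasDerivAt (fun s => ∫ θ in (-π)..π, u s θ ^ (-β))
      (β * (β + 1) * ∫ x in (-π)..π, deriv (u s) x / √(u s x) *
        (deriv (deriv (deriv (u s))) x + α ^ 2 * deriv (u s) x - Real.sin x)) s := by
    intro s hs
    rw [interior_Ici] at hs
    exact hu.hasDerivAt_entropy hβ hs
  have hle : ∀ s ∈ interior (Ici (0 : ℝ)),
      deriv (fun s => ∫ θ in (-π)..π, u s θ ^ (-β)) s ≤ β * (β + 1) * C := by
    intro s hs
    rw [(hder s hs).deriv]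
    rw [interior_Ici] at hs
    have hs0 : 0 ≤ s := le_of_lt hs
    have h0 := contDiff_infty_iff_deriv.1 (hu.contDiff_slice hs0)
    have h1 := contDiff_infty_iff_deriv.1 h0.2
    have h2 := contDiff_infty_iff_deriv.1 h1.2
    have hper := hu.2.2.1 s
    refine mul_le_mul_of_nonneg_left ?_ (by positivity)
    exact hC _ _ _ _ (fun x => hu.2.1 s x hs0) (fun x => (h0.1 x).hasDerivAt)
      (fun x => (h1.1 x).hasDerivAt) (fun x => (h2.1 x).hasDerivAt) h2.2.continuous
      hper (periodic_deriv hper) (periodic_deriv (periodic_deriv hper))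
      ((hu.integral_eq_initial hs0).trans hmass)
  have := (convex_Ici (0 : ℝ)).image_sub_le_mul_sub_of_deriv_le hcont
    (fun s hs => (hder s hs).differentiableAt.differentiableWithinAt) hle
    0 self_mem_Ici t ht ht
  simp only [sub_zero] at this
  linarith
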